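/- arXiv:2506.00961 — 4 statements merged into one kernel-verified Lean document; each statement's English description precedes it below -/
import Mathlib

section
/- Consider the DAT-SGD sequences generated with a gossip matrix P that satisfies the ρ-contraction property for some ρ ∈ (0,1]. Then for every t ≥ 1 the consensus distances satisfy the recursion Γ_{t+1} ≤ (1 − ρ/2)·Γ_t + (4δ_t²/ρ)·(Ξ_t + η² α_t² Ψ_t), where δ_t := α_t/α_{1:t}. -/
/-- Young's inequality for the squared norm of a sum. -/
lemma norm_add_sq_le_young {E : Type*} [SeminormedAddCommGroup E] {β : ℝ} (hβ : 0 < β) (u v : E) :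
    ‖u + v‖ ^ 2 ≤ (1 + β) * ‖u‖ ^ 2 + (1 + β⁻¹) * ‖v‖ ^ 2 := by
  have triangle : ‖u + v‖ ^ 2 ≤ (‖u‖ + ‖v‖) ^ 2 := by
    gcongr
    exact norm_add_le u v
  have gap : (1 + β) * ‖u‖ ^ 2 + (1 + β⁻¹) * ‖v‖ ^ 2 - (‖u‖ + ‖v‖) ^ 2
      = β⁻¹ * (β * ‖u‖ - ‖v‖) ^ 2 := by
    field_simp
    ring
  have : 0 ≤ β⁻¹ * (β * ‖u‖ - ‖v‖) ^ 2 := by positivity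
  linarith

/-- The contraction factor `1 - ρ` absorbs the cost of splitting off a perturbation. -/
lemma contraction_mul_norm_sq_le {E : Type*} [SeminormedAddCommGroup E] [NormedSpace ℝ E]
    {ρ a : ℝ} (hρ0 : 0 < ρ) (hρ1 : ρ ≤ 1) (ha : a ^ 2 ≤ 1) (b c : ℝ) (u v z : E) :
    (1 - ρ) * ‖a • u + b • (v - c • z)‖ ^ 2
      ≤ (1 - ρ / 2) * ‖u‖ ^ 2 + (4 * b ^ 2 / ρ) * (‖v‖ ^ 2 + c ^ 2 * ‖z‖ ^ 2) := by
  have split_sum := norm_add_sq_le_young (half_pos hρ0) (a • u) (b • (v - c • z))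
  have split_diff := norm_add_sq_le_young one_pos v (-(c • z))
  simp only [← sub_eq_add_neg, norm_neg, norm_smul, mul_pow, Real.norm_eq_abs, sq_abs]
    at split_sum split_diff
  have coeff_u : (1 - ρ) * ((1 + ρ / 2) * (a ^ 2 * ‖u‖ ^ 2)) ≤ (1 - ρ / 2) * ‖u‖ ^ 2 := by
    have shrink : a ^ 2 * ‖u‖ ^ 2 ≤ ‖u‖ ^ 2 := mul_le_of_le_one_left (sq_nonneg _) ha
    have nonneg : 0 ≤ (1 - ρ) * (1 + ρ / 2) := mul_nonneg (by linarith) (by linarith)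
    calc (1 - ρ) * ((1 + ρ / 2) * (a ^ 2 * ‖u‖ ^ 2))
        = (1 - ρ) * (1 + ρ / 2) * (a ^ 2 * ‖u‖ ^ 2) := by ring
      _ ≤ (1 - ρ) * (1 + ρ / 2) * ‖u‖ ^ 2 := by gcongr
      _ ≤ (1 - ρ / 2) * ‖u‖ ^ 2 := by
        gcongr
        nlinarith
  have coeff_v : (1 - ρ) * ((1 + (ρ / 2)⁻¹) * (b ^ 2 * ‖v - c • z‖ ^ 2))
      ≤ (4 * b ^ 2 / ρ) * (‖v‖ ^ 2 + c ^ 2 * ‖z‖ ^ 2) := by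
    have factor : (1 - ρ) * (1 + (ρ / 2)⁻¹) ≤ 2 / ρ := by
      rw [le_div_iff₀ hρ0]
      have : (1 - ρ) * (1 + (ρ / 2)⁻¹) * ρ = (1 - ρ) * (ρ + 2) := by field_simp
      nlinarith
    calc (1 - ρ) * ((1 + (ρ / 2)⁻¹) * (b ^ 2 * ‖v - c • z‖ ^ 2))
        = (1 - ρ) * (1 + (ρ / 2)⁻¹) * (b ^ 2 * ‖v - c • z‖ ^ 2) := by ring
      _ ≤ 2 / ρ * (b ^ 2 * (2 * (‖v‖ ^ 2 + c ^ 2 * ‖z‖ ^ 2))) := by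
        gcongr
        linarith
      _ = (4 * b ^ 2 / ρ) * (‖v‖ ^ 2 + c ^ 2 * ‖z‖ ^ 2) := by ring
  have scaled := mul_le_mul_of_nonneg_left split_sum (sub_nonneg.2 hρ1)
  linarith

/-- A matrix with unit column sums preserves the sum of a family of vectors. -/
lemma sum_sum_smul_of_col_sum_eq_one {ι R E : Type*} [Fintype ι] [Semiring R] [AddCommMonoid E]
    [Module R E] {P : Matrix ι ι R} (hP : ∀ j, ∑ i, P i j = 1) (Y : ι → E) :
    ∑ i, ∑ j, P i j • Y j = ∑ j, Y j := by
  rw [Finset.sum_comm]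
  simp [← Finset.sum_smul, hP]

/-- For DAT-SGD with a gossip matrix `P` satisfying the ρ-contraction
property, for every `t ≥ 1` the consensus distances satisfy
`Γ_{t+1} ≤ (1 − ρ/2)·Γ_t + (4δ_t²/ρ)·(Ξ_t + η² α_t² Ψ_t)` where `δ_t = α_t/α_{1:t}`. -/
theorem stmt_6
    (d M : ℕ) (hd : 1 ≤ d) (hM : 1 ≤ M)
    (η : ℝ) (hη : 0 < η)
    (α : ℕ → ℝ) (hα_nonneg : ∀ t ≥ 1, 0 ≤ α t) (hα1 : 0 < α 1)
    (A : ℕ → ℝ) (hA : ∀ t, A t = ∑ τ ∈ Finset.Icc 1 t, α τ)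
    (P : Matrix (Fin M) (Fin M) ℝ)
    (hP_symm : P.IsSymm)
    (hP_nonneg : ∀ i j, 0 ≤ P i j) (hP_le_one : ∀ i j, P i j ≤ 1)
    (hP_rows : ∀ i, ∑ j, P i j = 1) (hP_cols : ∀ j, ∑ i, P i j = 1)
    (w₁ : EuclideanSpace ℝ (Fin d))
    (g w x : ℕ → Fin M → EuclideanSpace ℝ (Fin d))
    (hw1 : ∀ i, w 1 i = w₁) (hx1 : ∀ i, x 1 i = w₁)
    (hwrec : ∀ t ≥ 1, ∀ i,
      w (t + 1) i = ∑ j, P i j • (w t j - (η * α t) • g t j))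
    (hxrec : ∀ t ≥ 1, ∀ i,
      x (t + 1) i = ∑ j, P i j •
        ((A (t - 1) / A t) • x t j + (α t / A t) • (w t j - (η * α t) • g t j)))
    (ρ : ℝ) (hρ : ρ ∈ Set.Ioc (0 : ℝ) 1)
    (hP_contract : ∀ Y : Fin M → EuclideanSpace ℝ (Fin d),
      ∑ i, ‖(∑ j, P i j • Y j) - (M : ℝ)⁻¹ • ∑ j, Y j‖ ^ 2
        ≤ (1 - ρ) * ∑ i, ‖Y i - (M : ℝ)⁻¹ • ∑ j, Y j‖ ^ 2)
    (Γ Ξ Ψ : ℕ → ℝ)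
    (hΓ : ∀ t, Γ t = (M : ℝ)⁻¹ * ∑ i, ‖x t i - (M : ℝ)⁻¹ • ∑ j, x t j‖ ^ 2)
    (hΞ : ∀ t, Ξ t = (M : ℝ)⁻¹ * ∑ i, ‖w t i - (M : ℝ)⁻¹ • ∑ j, w t j‖ ^ 2)
    (hΨ : ∀ t, Ψ t = (M : ℝ)⁻¹ * ∑ i, ‖g t i - (M : ℝ)⁻¹ • ∑ j, g t j‖ ^ 2)
    :
    ∀ t ≥ 1,
      Γ (t + 1) ≤ (1 - ρ / 2) * Γ t
        + (4 * (α t / A t) ^ 2 / ρ) * (Ξ t + η ^ 2 * (α t) ^ 2 * Ψ t) := by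
  intro t ht
  have hα_le : α 1 ≤ A t := by
    rw [hA]
    exact Finset.single_le_sum (fun τ hτ => hα_nonneg τ (Finset.mem_Icc.1 hτ).1)
      (Finset.mem_Icc.2 ⟨le_rfl, ht⟩)
  have hA_pos : 0 < A t := hα1.trans_le hα_le
  have hA_prev_nonneg : 0 ≤ A (t - 1) := by
    rw [hA]
    exact Finset.sum_nonneg fun τ hτ => hα_nonneg τ (Finset.mem_Icc.1 hτ).1
  have hA_prev_le : A (t - 1) ≤ A t := by
    rw [hA, hA]
    exact Finset.sum_le_sum_of_subset_of_nonneg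
      (Finset.Icc_subset_Icc_right (Nat.sub_le t 1))
      fun τ hτ _ => hα_nonneg τ (Finset.mem_Icc.1 hτ).1
  have ratio_sq_le : (A (t - 1) / A t) ^ 2 ≤ 1 :=
    pow_le_one₀ (by positivity) ((div_le_one hA_pos).2 hA_prev_le)
  set a := A (t - 1) / A t
  set b := α t / A t
  set c := η * α t with hc
  let Y : Fin M → EuclideanSpace ℝ (Fin d) := fun j => a • x t j + b • (w t j - c • g t j)
  have x_next : ∀ i, x (t + 1) i = ∑ j, P i j • Y j := hxrec t ht
  have deviation : ∀ i, Y i - (M : ℝ)⁻¹ • ∑ j, Y j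
      = a • (x t i - (M : ℝ)⁻¹ • ∑ j, x t j)
        + b • ((w t i - (M : ℝ)⁻¹ • ∑ j, w t j) - c • (g t i - (M : ℝ)⁻¹ • ∑ j, g t j)) := by
    intro i
    simp only [Y, Finset.sum_add_distrib, Finset.sum_sub_distrib, ← Finset.smul_sum]
    module
  have contracted := hP_contract Y
  rw [hΓ (t + 1), hΓ t, hΞ, hΨ]
  simp only [x_next, sum_sum_smul_of_col_sum_eq_one hP_cols]
  calc (M : ℝ)⁻¹ * ∑ i, ‖(∑ j, P i j • Y j) - (M : ℝ)⁻¹ • ∑ j, Y j‖ ^ 2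
      ≤ (M : ℝ)⁻¹ * ∑ i, (1 - ρ) * ‖Y i - (M : ℝ)⁻¹ • ∑ j, Y j‖ ^ 2 := by
        rw [← Finset.mul_sum]
        gcongr
    _ ≤ (M : ℝ)⁻¹ * ∑ i, ((1 - ρ / 2) * ‖x t i - (M : ℝ)⁻¹ • ∑ j, x t j‖ ^ 2
          + (4 * b ^ 2 / ρ) * (‖w t i - (M : ℝ)⁻¹ • ∑ j, w t j‖ ^ 2
            + c ^ 2 * ‖g t i - (M : ℝ)⁻¹ • ∑ j, g t j‖ ^ 2)) := by
        gcongr with i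
        rw [deviation]
        exact contraction_mul_norm_sq_le hρ.1 hρ.2 ratio_sq_le b c _ _ _
    _ = _ := by
        simp only [Finset.sum_add_distrib, ← Finset.mul_sum, hc]
        ring
end

section
/- Consider the DAT-SGD sequences generated with a gossip matrix P that satisfies the ρ-contraction property for some ρ ∈ (0,1]. Then for every t ≥ 1 the consensus distance of the iterates satisfies the recursion Ξ_{t+1} ≤ (1 − ρ/2)·Ξ_t + (2η² α_t²/ρ)·Ψ_t. -/
/-- A Young-type inequality absorbing the contraction factor `1 - ρ`. -/
lemma one_sub_mul_norm_sub_sq_le {E : Type*} [SeminormedAddCommGroup E] {ρ : ℝ}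
    (hρ : ρ ∈ Set.Ioc (0 : ℝ) 1) (a b : E) :
    (1 - ρ) * ‖a - b‖ ^ 2 ≤ (1 - ρ / 2) * ‖a‖ ^ 2 + 2 / ρ * ‖b‖ ^ 2 := by
  obtain ⟨hρ0, hρ1⟩ := hρ
  have hsub : ‖a - b‖ ^ 2 ≤ (‖a‖ + ‖b‖) ^ 2 := by
    gcongr
    exact norm_sub_le a b
  have hyoung : (‖a‖ + ‖b‖) ^ 2 ≤ (1 + ρ / 2) * ‖a‖ ^ 2 + (1 + 2 / ρ) * ‖b‖ ^ 2 := by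
    have hsq : (1 + ρ / 2) * ‖a‖ ^ 2 + (1 + 2 / ρ) * ‖b‖ ^ 2 - (‖a‖ + ‖b‖) ^ 2
        = (ρ * ‖a‖ - 2 * ‖b‖) ^ 2 / (2 * ρ) := by
      field_simp
      ring
    have : 0 ≤ (ρ * ‖a‖ - 2 * ‖b‖) ^ 2 / (2 * ρ) := by positivity
    linarith
  have hscaled := mul_le_mul_of_nonneg_left (hsub.trans hyoung) (sub_nonneg.2 hρ1)
  have hexpand : (1 - ρ) * ((1 + ρ / 2) * ‖a‖ ^ 2 + (1 + 2 / ρ) * ‖b‖ ^ 2)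
      = (1 - ρ / 2) * ‖a‖ ^ 2 + 2 / ρ * ‖b‖ ^ 2
        - (ρ ^ 2 / 2 * ‖a‖ ^ 2 + (1 + ρ) * ‖b‖ ^ 2) := by
    field_simp
    ring
  have : 0 ≤ ρ ^ 2 / 2 * ‖a‖ ^ 2 + (1 + ρ) * ‖b‖ ^ 2 := by positivity
  linarith

/-- Mixing with a matrix whose columns sum to one preserves the total. -/
lemma sum_sum_smul_eq_sum_of_col_sum_one {ι E : Type*} [Fintype ι] [AddCommGroup E]
    [Module ℝ E] {P : Matrix ι ι ℝ} (hP : ∀ j, ∑ i, P i j = 1) (Y : ι → E) :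
    ∑ i, ∑ j, P i j • Y j = ∑ j, Y j := by
  rw [Finset.sum_comm]
  simp only [← Finset.sum_smul, hP, one_smul]

/-- For DAT-SGD with a gossip matrix `P` satisfying the ρ-contraction
property, for every `t ≥ 1` the consensus distance of the iterates satisfies
`Ξ_{t+1} ≤ (1 − ρ/2)·Ξ_t + (2η² α_t²/ρ)·Ψ_t`. -/
theorem stmt_7
    (d M : ℕ) (hd : 1 ≤ d) (hM : 1 ≤ M)
    (η : ℝ) (hη : 0 < η)
    (α : ℕ → ℝ) (hα_nonneg : ∀ t ≥ 1, 0 ≤ α t) (hα1 : 0 < α 1)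
    (A : ℕ → ℝ) (hA : ∀ t, A t = ∑ τ ∈ Finset.Icc 1 t, α τ)
    (P : Matrix (Fin M) (Fin M) ℝ)
    (hP_symm : P.IsSymm)
    (hP_nonneg : ∀ i j, 0 ≤ P i j) (hP_le_one : ∀ i j, P i j ≤ 1)
    (hP_rows : ∀ i, ∑ j, P i j = 1) (hP_cols : ∀ j, ∑ i, P i j = 1)
    (w₁ : EuclideanSpace ℝ (Fin d))
    (g w x : ℕ → Fin M → EuclideanSpace ℝ (Fin d))
    (hw1 : ∀ i, w 1 i = w₁) (hx1 : ∀ i, x 1 i = w₁)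
    (hwrec : ∀ t ≥ 1, ∀ i,
      w (t + 1) i = ∑ j, P i j • (w t j - (η * α t) • g t j))
    (hxrec : ∀ t ≥ 1, ∀ i,
      x (t + 1) i = ∑ j, P i j •
        ((A (t - 1) / A t) • x t j + (α t / A t) • (w t j - (η * α t) • g t j)))
    (ρ : ℝ) (hρ : ρ ∈ Set.Ioc (0 : ℝ) 1)
    (hP_contract : ∀ Y : Fin M → EuclideanSpace ℝ (Fin d),
      ∑ i, ‖(∑ j, P i j • Y j) - (M : ℝ)⁻¹ • ∑ j, Y j‖ ^ 2
        ≤ (1 - ρ) * ∑ i, ‖Y i - (M : ℝ)⁻¹ • ∑ j, Y j‖ ^ 2)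
    (Γ Ξ Ψ : ℕ → ℝ)
    (hΓ : ∀ t, Γ t = (M : ℝ)⁻¹ * ∑ i, ‖x t i - (M : ℝ)⁻¹ • ∑ j, x t j‖ ^ 2)
    (hΞ : ∀ t, Ξ t = (M : ℝ)⁻¹ * ∑ i, ‖w t i - (M : ℝ)⁻¹ • ∑ j, w t j‖ ^ 2)
    (hΨ : ∀ t, Ψ t = (M : ℝ)⁻¹ * ∑ i, ‖g t i - (M : ℝ)⁻¹ • ∑ j, g t j‖ ^ 2)
    :
    ∀ t ≥ 1,
      Ξ (t + 1) ≤ (1 - ρ / 2) * Ξ t + (2 * η ^ 2 * (α t) ^ 2 / ρ) * Ψ t := by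
  intro t ht
  set c := η * α t with hc
  have hcontract := hP_contract fun j => w t j - c • g t j
  have hmean : ∑ i, w (t + 1) i = ∑ j, (w t j - c • g t j) := by
    simp only [hwrec t ht]
    exact sum_sum_smul_eq_sum_of_col_sum_one hP_cols _
  have hdev : ∀ i, w t i - c • g t i - (M : ℝ)⁻¹ • ∑ j, (w t j - c • g t j)
      = (w t i - (M : ℝ)⁻¹ • ∑ j, w t j) - c • (g t i - (M : ℝ)⁻¹ • ∑ j, g t j) := by
    intro i
    rw [Finset.sum_sub_distrib, ← Finset.smul_sum]
    module
  have hsum : ∑ i, ‖w (t + 1) i - (M : ℝ)⁻¹ • ∑ j, w (t + 1) j‖ ^ 2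
      ≤ (1 - ρ / 2) * ∑ i, ‖w t i - (M : ℝ)⁻¹ • ∑ j, w t j‖ ^ 2
        + 2 / ρ * c ^ 2 * ∑ i, ‖g t i - (M : ℝ)⁻¹ • ∑ j, g t j‖ ^ 2 := by
    rw [hmean]
    simp only [hwrec t ht]
    refine hcontract.trans ?_
    simp only [hdev, Finset.mul_sum, ← Finset.sum_add_distrib]
    refine Finset.sum_le_sum fun i _ => (one_sub_mul_norm_sub_sq_le hρ _ _).trans_eq ?_
    rw [norm_smul, mul_pow, Real.norm_eq_abs, sq_abs, mul_assoc (2 / ρ)]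
  rw [hΞ, hΞ, hΨ]
  refine (mul_le_mul_of_nonneg_left hsum (by positivity)).trans_eq ?_
  rw [hc]
  ring
end

section
/- Consider the DAT-SGD sequences generated with a gossip matrix P that satisfies the ρ-contraction property for some ρ ∈ (0,1], with a non-decreasing weight sequence (α_t). Then for every t ≥ 1 the consensus distance of the query points satisfies Γ_{t+1} ≤ (1 − ρ/2)·Γ_t + (4η² α_t² δ_t²/ρ)·(Ψ_t + (2/ρ)·Σ_{τ=1}^{t−1} (1 − ρ/2)^{t−1−τ} Ψ_τ), where δ_t := α_t/α_{1:t}. -/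
/-- Mean squared deviation of a finite family of vectors from its average. -/
noncomputable def consensusDist {M : ℕ} {E : Type*} [NormedAddCommGroup E] [NormedSpace ℝ E]
    (Y : Fin M → E) : ℝ :=
  (M : ℝ)⁻¹ * ∑ i, ‖Y i - (M : ℝ)⁻¹ • ∑ j, Y j‖ ^ 2

lemma norm_add_sq_le_young_s9 {E : Type*} [SeminormedAddCommGroup E] (a b : E)
    {c : ℝ} (hc : 0 < c) :
    ‖a + b‖ ^ 2 ≤ (1 + c) * ‖a‖ ^ 2 + (1 + 1 / c) * ‖b‖ ^ 2 := by
  have h1 : ‖a + b‖ ^ 2 ≤ (‖a‖ + ‖b‖) ^ 2 := by gcongr; exact norm_add_le a b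
  have h2 : (1 + c) * ‖a‖ ^ 2 + (1 + 1 / c) * ‖b‖ ^ 2 - (‖a‖ + ‖b‖) ^ 2
      = (c * ‖a‖ - ‖b‖) ^ 2 / c := by
    field_simp
    ring
  have h3 : 0 ≤ (c * ‖a‖ - ‖b‖) ^ 2 / c := by positivity
  linarith

section ConsensusDist

variable {M : ℕ} {E : Type*} [NormedAddCommGroup E] [NormedSpace ℝ E]

lemma consensusDist_nonneg (Y : Fin M → E) : 0 ≤ consensusDist Y := by
  unfold consensusDist
  positivity

lemma consensusDist_smul (a : ℝ) (Y : Fin M → E) :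
    consensusDist (fun i => a • Y i) = a ^ 2 * consensusDist Y := by
  have h (i : Fin M) : ‖a • Y i - (M : ℝ)⁻¹ • ∑ j, a • Y j‖ ^ 2
      = a ^ 2 * ‖Y i - (M : ℝ)⁻¹ • ∑ j, Y j‖ ^ 2 := by
    rw [← Finset.smul_sum, smul_comm, ← smul_sub, norm_smul, mul_pow, Real.norm_eq_abs, sq_abs]
  simp only [consensusDist, h, ← Finset.mul_sum]
  ring

lemma consensusDist_add_le (Y Z : Fin M → E) {c : ℝ} (hc : 0 < c) :
    consensusDist (fun i => Y i + Z i)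
      ≤ (1 + c) * consensusDist Y + (1 + 1 / c) * consensusDist Z := by
  have h (i : Fin M) : ‖Y i + Z i - (M : ℝ)⁻¹ • ∑ j, (Y j + Z j)‖ ^ 2
      ≤ (1 + c) * ‖Y i - (M : ℝ)⁻¹ • ∑ j, Y j‖ ^ 2
        + (1 + 1 / c) * ‖Z i - (M : ℝ)⁻¹ • ∑ j, Z j‖ ^ 2 := by
    rw [Finset.sum_add_distrib, smul_add, add_sub_add_comm]
    exact norm_add_sq_le_young_s9 _ _ hc
  calc consensusDist (fun i => Y i + Z i)
      ≤ (M : ℝ)⁻¹ * ∑ i, ((1 + c) * ‖Y i - (M : ℝ)⁻¹ • ∑ j, Y j‖ ^ 2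
        + (1 + 1 / c) * ‖Z i - (M : ℝ)⁻¹ • ∑ j, Z j‖ ^ 2) := by
        unfold consensusDist
        gcongr with i
        exact h i
    _ = (1 + c) * consensusDist Y + (1 + 1 / c) * consensusDist Z := by
        simp only [consensusDist, Finset.sum_add_distrib, ← Finset.mul_sum]
        ring

lemma consensusDist_sub_smul_le (Y Z : Fin M → E) (a : ℝ) {c : ℝ} (hc : 0 < c) :
    consensusDist (fun i => Y i - a • Z i)
      ≤ (1 + c) * consensusDist Y + (1 + 1 / c) * (a ^ 2 * consensusDist Z) := by
  have h := consensusDist_add_le Y (fun i => (-a) • Z i) hc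
  rw [consensusDist_smul, neg_sq] at h
  simpa only [neg_smul, ← sub_eq_add_neg] using h

lemma consensusDist_mulVec_le {P : Matrix (Fin M) (Fin M) ℝ}
    (hP_cols : ∀ j, ∑ i, P i j = 1) {ρ : ℝ}
    (hP_contract : ∀ Y : Fin M → E,
      ∑ i, ‖(∑ j, P i j • Y j) - (M : ℝ)⁻¹ • ∑ j, Y j‖ ^ 2
        ≤ (1 - ρ) * ∑ i, ‖Y i - (M : ℝ)⁻¹ • ∑ j, Y j‖ ^ 2)
    (Y : Fin M → E) :
    consensusDist (fun i => ∑ j, P i j • Y j) ≤ (1 - ρ) * consensusDist Y := by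
  have hmean : ∑ i, ∑ j, P i j • Y j = ∑ j, Y j := by
    rw [Finset.sum_comm]
    simp only [← Finset.sum_smul, hP_cols, one_smul]
  unfold consensusDist
  rw [hmean, mul_left_comm]
  gcongr
  exact hP_contract Y

/-- Absorbing the Young constants with parameter `ρ / 2` into the contraction factor `1 - ρ`. -/
lemma contraction_mul_young_le {ρ u v : ℝ} (hρ : ρ ∈ Set.Ioc (0 : ℝ) 1)
    (hu : 0 ≤ u) (hv : 0 ≤ v) :
    (1 - ρ) * ((1 + ρ / 2) * u + (1 + 1 / (ρ / 2)) * v) ≤ (1 - ρ / 2) * u + 2 / ρ * v := by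
  have hρ0 := hρ.1
  have h : (1 - ρ / 2) * u + 2 / ρ * v - (1 - ρ) * ((1 + ρ / 2) * u + (1 + 1 / (ρ / 2)) * v)
      = ρ ^ 2 / 2 * u + (1 + ρ) * v := by
    field_simp
    ring
  have : 0 ≤ ρ ^ 2 / 2 * u + (1 + ρ) * v := by positivity
  linarith

end ConsensusDist

/-- For DAT-SGD with a gossip matrix `P` satisfying the ρ-contraction
property and non-decreasing weights, for every `t ≥ 1` the consensus distance of the
query points satisfies `Γ_{t+1} ≤ (1 − ρ/2)·Γ_t + (4η² α_t² δ_t²/ρ)·(Ψ_t +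
(2/ρ)·Σ_{τ=1}^{t−1} (1 − ρ/2)^{t−1−τ} Ψ_τ)` where `δ_t = α_t/α_{1:t}`. -/
theorem stmt_9
    (d M : ℕ) (hd : 1 ≤ d) (hM : 1 ≤ M)
    (η : ℝ) (hη : 0 < η)
    (α : ℕ → ℝ) (hα_nonneg : ∀ t ≥ 1, 0 ≤ α t) (hα1 : 0 < α 1)
    (A : ℕ → ℝ) (hA : ∀ t, A t = ∑ τ ∈ Finset.Icc 1 t, α τ)
    (P : Matrix (Fin M) (Fin M) ℝ)
    (hP_symm : P.IsSymm)
    (hP_nonneg : ∀ i j, 0 ≤ P i j) (hP_le_one : ∀ i j, P i j ≤ 1)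
    (hP_rows : ∀ i, ∑ j, P i j = 1) (hP_cols : ∀ j, ∑ i, P i j = 1)
    (w₁ : EuclideanSpace ℝ (Fin d))
    (g w x : ℕ → Fin M → EuclideanSpace ℝ (Fin d))
    (hw1 : ∀ i, w 1 i = w₁) (hx1 : ∀ i, x 1 i = w₁)
    (hwrec : ∀ t ≥ 1, ∀ i,
      w (t + 1) i = ∑ j, P i j • (w t j - (η * α t) • g t j))
    (hxrec : ∀ t ≥ 1, ∀ i,
      x (t + 1) i = ∑ j, P i j •
        ((A (t - 1) / A t) • x t j + (α t / A t) • (w t j - (η * α t) • g t j)))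
    (hα_mono : ∀ t ≥ 1, α t ≤ α (t + 1))
    (ρ : ℝ) (hρ : ρ ∈ Set.Ioc (0 : ℝ) 1)
    (hP_contract : ∀ Y : Fin M → EuclideanSpace ℝ (Fin d),
      ∑ i, ‖(∑ j, P i j • Y j) - (M : ℝ)⁻¹ • ∑ j, Y j‖ ^ 2
        ≤ (1 - ρ) * ∑ i, ‖Y i - (M : ℝ)⁻¹ • ∑ j, Y j‖ ^ 2)
    (Γ Ξ Ψ : ℕ → ℝ)
    (hΓ : ∀ t, Γ t = (M : ℝ)⁻¹ * ∑ i, ‖x t i - (M : ℝ)⁻¹ • ∑ j, x t j‖ ^ 2)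
    (hΞ : ∀ t, Ξ t = (M : ℝ)⁻¹ * ∑ i, ‖w t i - (M : ℝ)⁻¹ • ∑ j, w t j‖ ^ 2)
    (hΨ : ∀ t, Ψ t = (M : ℝ)⁻¹ * ∑ i, ‖g t i - (M : ℝ)⁻¹ • ∑ j, g t j‖ ^ 2)
    :
    ∀ t ≥ 1,
      Γ (t + 1) ≤ (1 - ρ / 2) * Γ t
        + (4 * η ^ 2 * (α t) ^ 2 * (α t / A t) ^ 2 / ρ)
          * (Ψ t + (2 / ρ) * ∑ τ ∈ Finset.Icc 1 (t - 1), (1 - ρ / 2) ^ (t - 1 - τ) * Ψ τ) := by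
  have hρ0 := hρ.1
  have hρ1 := hρ.2
  change ∀ t, Γ t = consensusDist (x t) at hΓ
  change ∀ t, Ξ t = consensusDist (w t) at hΞ
  change ∀ t, Ψ t = consensusDist (g t) at hΨ
  have hΓ0 (t) : 0 ≤ Γ t := hΓ t ▸ consensusDist_nonneg _
  have hΞ0 (t) : 0 ≤ Ξ t := hΞ t ▸ consensusDist_nonneg _
  have hΨ0 (t) : 0 ≤ Ψ t := hΨ t ▸ consensusDist_nonneg _
  have hΞ_step (t : ℕ) (ht : 1 ≤ t) :
      Ξ (t + 1) ≤ (1 - ρ / 2) * Ξ t + 2 / ρ * ((η * α t) ^ 2 * Ψ t) := by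
    rw [hΞ (t + 1), funext (hwrec t ht)]
    refine (consensusDist_mulVec_le hP_cols hP_contract _).trans ?_
    refine le_trans ?_ (contraction_mul_young_le hρ (hΞ0 t)
      (mul_nonneg (sq_nonneg (η * α t)) (hΨ0 t)))
    rw [hΞ, hΨ]
    exact mul_le_mul_of_nonneg_left
      (consensusDist_sub_smul_le (w t) (g t) (η * α t) (half_pos hρ0)) (by linarith)
  have hS0 (n : ℕ) : 0 ≤ ∑ τ ∈ Finset.Icc 1 n, (1 - ρ / 2) ^ (n - τ) * Ψ τ :=
    Finset.sum_nonneg fun τ _ => mul_nonneg (pow_nonneg (by linarith) _) (hΨ0 τ)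
  have hS_succ (n : ℕ) : ∑ τ ∈ Finset.Icc 1 (n + 1), (1 - ρ / 2) ^ (n + 1 - τ) * Ψ τ
      = (1 - ρ / 2) * ∑ τ ∈ Finset.Icc 1 n, (1 - ρ / 2) ^ (n - τ) * Ψ τ + Ψ (n + 1) := by
    rw [Finset.sum_Icc_succ_top (by omega), Finset.mul_sum]
    congr 1
    · refine Finset.sum_congr rfl fun τ hτ => ?_
      rw [Nat.succ_sub (Finset.mem_Icc.1 hτ).2, pow_succ']
      ring
    · simp
  have hΞ_le (n : ℕ) : Ξ (n + 1) ≤ 2 / ρ * (η * α (n + 1)) ^ 2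
      * ∑ τ ∈ Finset.Icc 1 n, (1 - ρ / 2) ^ (n - τ) * Ψ τ := by
    induction n with
    | zero =>
      have hM0 : (M : ℝ) ≠ 0 := by positivity
      simp [hΞ, consensusDist, hw1, ← Nat.cast_smul_eq_nsmul ℝ, smul_smul, hM0]
    | succ n ih =>
      have hα0 := hα_nonneg (n + 1) (by omega)
      have hmono := hα_mono (n + 1) (by omega)
      calc Ξ (n + 1 + 1)
          ≤ (1 - ρ / 2) * Ξ (n + 1) + 2 / ρ * ((η * α (n + 1)) ^ 2 * Ψ (n + 1)) :=
            hΞ_step (n + 1) (by omega)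
        _ ≤ (1 - ρ / 2) * (2 / ρ * (η * α (n + 1)) ^ 2
              * ∑ τ ∈ Finset.Icc 1 n, (1 - ρ / 2) ^ (n - τ) * Ψ τ)
            + 2 / ρ * ((η * α (n + 1)) ^ 2 * Ψ (n + 1)) :=
            add_le_add_left (mul_le_mul_of_nonneg_left ih (by linarith)) _
        _ = 2 / ρ * (η * α (n + 1)) ^ 2
              * ∑ τ ∈ Finset.Icc 1 (n + 1), (1 - ρ / 2) ^ (n + 1 - τ) * Ψ τ := by
            rw [hS_succ]
            ring
        _ ≤ _ := by
            have := hS0 (n + 1)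
            gcongr
  intro t ht
  obtain ⟨n, rfl⟩ : ∃ n, t = n + 1 := ⟨t - 1, by omega⟩
  have hxn := funext (hxrec (n + 1) ht)
  have hΞn := hΞ_le n
  simp only [Nat.add_sub_cancel] at hxn ⊢
  set S := ∑ τ ∈ Finset.Icc 1 n, (1 - ρ / 2) ^ (n - τ) * Ψ τ
  set δ := α (n + 1) / A (n + 1)
  set a := η * α (n + 1) with ha
  have hA0 : 0 ≤ A n := by
    rw [hA]
    exact Finset.sum_nonneg fun τ hτ => hα_nonneg τ (Finset.mem_Icc.1 hτ).1
  have hA_le : A n ≤ A (n + 1) := by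
    rw [hA, hA, Finset.sum_Icc_succ_top (by omega)]
    exact le_add_of_nonneg_right (hα_nonneg _ ht)
  have hratio : (A n / A (n + 1)) ^ 2 ≤ 1 :=
    pow_le_one₀ (div_nonneg hA0 (hA0.trans hA_le)) (div_le_one_of_le₀ hA_le (hA0.trans hA_le))
  have hhalf : consensusDist (fun j => w (n + 1) j - a • g (n + 1) j)
      ≤ 2 * Ξ (n + 1) + 2 * (a ^ 2 * Ψ (n + 1)) := by
    have h := consensusDist_sub_smul_le (w (n + 1)) (g (n + 1)) a one_pos
    rw [← hΞ, ← hΨ] at h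
    linarith
  have hmix := consensusDist_add_le (fun j => (A n / A (n + 1)) • x (n + 1) j)
    (fun j => δ • (w (n + 1) j - a • g (n + 1) j)) (half_pos hρ0)
  rw [consensusDist_smul, consensusDist_smul, ← hΓ] at hmix
  set H := consensusDist (fun j => w (n + 1) j - a • g (n + 1) j)
  have hH0 : 0 ≤ H := consensusDist_nonneg _
  calc Γ (n + 1 + 1)
      ≤ (1 - ρ) * ((1 + ρ / 2) * ((A n / A (n + 1)) ^ 2 * Γ (n + 1))
          + (1 + 1 / (ρ / 2)) * (δ ^ 2 * H)) := by
        rw [hΓ (n + 1 + 1), hxn]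
        exact (consensusDist_mulVec_le hP_cols hP_contract _).trans
          (mul_le_mul_of_nonneg_left hmix (by linarith))
    _ ≤ (1 - ρ / 2) * ((A n / A (n + 1)) ^ 2 * Γ (n + 1)) + 2 / ρ * (δ ^ 2 * H) :=
        contraction_mul_young_le hρ (mul_nonneg (sq_nonneg _) (hΓ0 _)) (by positivity)
    _ ≤ (1 - ρ / 2) * Γ (n + 1)
        + 2 / ρ * (δ ^ 2 * (2 * (2 / ρ * a ^ 2 * S) + 2 * (a ^ 2 * Ψ (n + 1)))) := by
        have hH : H ≤ 2 * (2 / ρ * a ^ 2 * S) + 2 * (a ^ 2 * Ψ (n + 1)) := by linarith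
        refine add_le_add (mul_le_mul_of_nonneg_left ?_ (by linarith)) (by gcongr)
        exact mul_le_of_le_one_left (hΓ0 _) hratio
    _ = _ := by
        rw [ha]
        ring
end

section
/- Let κ ∈ (0,1], let c₁ > 0, c₂ ≥ 0 and η ≥ 0 be constants with η ≤ κ²/(2c₁), and let (a_t)_{t≥1} be a sequence of nonnegative reals with a₁ = 0 satisfying, for all t ≥ 2: a_t ≤ (1 − κ + c₁²η²/κ)·a_{t−1} + (c₁²η²/κ²)·Σ_{τ=1}^{t−2} (1−κ)^{t−2−τ}·a_τ + c₂²η²/κ³. Then for all t ≥ 1: a_t ≤ 2c₂²η²/κ⁴. -/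
/-- A geometrically weighted sum of terms at most `M`, with ratio `1 - κ`, is at most `M / κ`. -/
theorem mul_sum_one_sub_pow_mul_le {κ M : ℝ} (hκ : 0 ≤ κ) (hκ1 : κ ≤ 1) (hM : 0 ≤ M)
    (a : ℕ → ℝ) (n : ℕ) (ha : ∀ τ ∈ Finset.Icc 1 n, a τ ≤ M) :
    κ * ∑ τ ∈ Finset.Icc 1 n, (1 - κ) ^ (n - τ) * a τ ≤ M := by
  induction n with
  | zero => simpa using hM
  | succ n ih =>
    have hsum : ∑ τ ∈ Finset.Icc 1 n, (1 - κ) ^ (n + 1 - τ) * a τ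
        = (1 - κ) * ∑ τ ∈ Finset.Icc 1 n, (1 - κ) ^ (n - τ) * a τ := by
      rw [Finset.mul_sum]
      refine Finset.sum_congr rfl fun τ hτ => ?_
      rw [Nat.sub_add_comm (Finset.mem_Icc.mp hτ).2, pow_succ]
      ring
    have hprev := ih fun τ hτ => ha τ (Finset.Icc_subset_Icc_right n.le_succ hτ)
    have hlast := ha (n + 1) (by simp)
    rw [Finset.sum_Icc_succ_top (by omega), hsum, Nat.sub_self, pow_zero, one_mul]
    nlinarith [mul_le_mul_of_nonneg_left hprev (sub_nonneg.mpr hκ1),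
      mul_le_mul_of_nonneg_left hlast hκ]

/-- Let `κ ∈ (0,1]`, constants `c₁ > 0`, `c₂ ≥ 0`, `η ≥ 0` with `η ≤ κ²/(2c₁)`,
and `(a_t)_{t≥1}` nonnegative reals with `a₁ = 0` satisfying, for all `t ≥ 2`:
`a_t ≤ (1 − κ + c₁²η²/κ)·a_{t−1} + (c₁²η²/κ²)·Σ_{τ=1}^{t−2} (1−κ)^{t−2−τ}·a_τ + c₂²η²/κ³`.
Then for all `t ≥ 1`: `a_t ≤ 2c₂²η²/κ⁴`. -/
theorem stmt_17 (κ c₁ c₂ η : ℝ) (hκ : κ ∈ Set.Ioc (0 : ℝ) 1)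
    (hc₁ : 0 < c₁) (hc₂ : 0 ≤ c₂) (hη : 0 ≤ η) (hηκ : η ≤ κ ^ 2 / (2 * c₁))
    (a : ℕ → ℝ) (ha_nonneg : ∀ t ≥ 1, 0 ≤ a t) (ha1 : a 1 = 0)
    (hrec : ∀ t ≥ 2, a t ≤ (1 - κ + c₁ ^ 2 * η ^ 2 / κ) * a (t - 1)
      + (c₁ ^ 2 * η ^ 2 / κ ^ 2) * ∑ τ ∈ Finset.Icc 1 (t - 2), (1 - κ) ^ (t - 2 - τ) * a τ
      + c₂ ^ 2 * η ^ 2 / κ ^ 3) :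
    ∀ t ≥ 1, a t ≤ 2 * c₂ ^ 2 * η ^ 2 / κ ^ 4 := by
  obtain ⟨hκ0, hκ1⟩ := hκ
  set M := 2 * c₂ ^ 2 * η ^ 2 / κ ^ 4 with hMdef
  have hM : 0 ≤ M := by positivity
  have hs : c₁ ^ 2 * η ^ 2 ≤ κ ^ 4 / 4 := by
    have hle : c₁ * η ≤ κ ^ 2 / 2 := by
      rw [le_div_iff₀ (by positivity)] at hηκ
      linarith
    calc c₁ ^ 2 * η ^ 2 = (c₁ * η) ^ 2 := by ring
      _ ≤ (κ ^ 2 / 2) ^ 2 := by gcongr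
      _ = κ ^ 4 / 4 := by ring
  have hconst : c₂ ^ 2 * η ^ 2 / κ ^ 3 = κ / 2 * M := by
    rw [hMdef]
    field_simp
  have hcoef₁ : c₁ ^ 2 * η ^ 2 / κ ≤ κ / 4 := by
    rw [div_le_iff₀ hκ0]
    nlinarith [pow_le_pow_of_le_one hκ0.le hκ1 (show 2 ≤ 4 by norm_num)]
  have hcoef₂ : c₁ ^ 2 * η ^ 2 / κ ^ 2 ≤ κ / 4 * κ := by
    rw [div_le_iff₀ (by positivity)]
    linarith
  intro t
  induction t using Nat.strong_induction_on with
  | _ t ih =>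
    intro ht
    obtain rfl | ht2 : t = 1 ∨ 2 ≤ t := by omega
    · rwa [ha1]
    have hprev := ih (t - 1) (by omega) (by omega)
    have hsum := mul_sum_one_sub_pow_mul_le hκ0.le hκ1 hM a (t - 2) fun τ hτ => by
      rw [Finset.mem_Icc] at hτ
      exact ih τ (by omega) hτ.1
    have hsum_nonneg : 0 ≤ ∑ τ ∈ Finset.Icc 1 (t - 2), (1 - κ) ^ (t - 2 - τ) * a τ :=
      Finset.sum_nonneg fun τ hτ => mul_nonneg (pow_nonneg (sub_nonneg.mpr hκ1) _)
        (ha_nonneg τ (Finset.mem_Icc.mp hτ).1)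
    have hterm₁ : (1 - κ + c₁ ^ 2 * η ^ 2 / κ) * a (t - 1) ≤ (1 - κ + κ / 4) * M :=
      mul_le_mul (by linarith) hprev (ha_nonneg _ (by omega)) (by linarith)
    have hterm₂ := mul_le_mul_of_nonneg_right hcoef₂ hsum_nonneg
    rw [mul_assoc] at hterm₂
    have hterm₃ := mul_le_mul_of_nonneg_left hsum (by positivity : 0 ≤ κ / 4)
    have hstep := hrec t ht2
    rw [hconst] at hstep
    linarith
end
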